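/- For all integers n ≥ 3, k₀ ≥ 1 and 1 ≤ i ≤ n−1, one has binom(n−1, i−1)·(dᵢ − c(n,k₀)) = binom(k₀+n−1, k₀+i)·binom(k₀+i−1, i−1), where dᵢ := (1/(n−1)!)·Π_{1 ≤ j ≤ n, j ≠ i}(k₀+j) and c(n,k₀) := binom(n−1+k₀, k₀). -/

import Mathlib

/-- `c n h` is the dimension of the space of homogeneous polynomials of degree `h`
in `n` variables: `c(n,h) = binom(n-1+h, h)`. -/
def c (n h : ℕ) : ℕ := (n - 1 + h).choose h

/-- The rational number `dᵢ := (1/(n−1)!)·Π_{1 ≤ j ≤ n, j ≠ i} (k₀+j)`. -/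
def dQ (n k₀ i : ℕ) : ℚ :=
  (1 / (n - 1).factorial) * ∏ j ∈ (Finset.Icc 1 n).erase i, ((k₀ : ℚ) + j)

theorem factorial_mul_prod_Icc_add (k n : ℕ) :
    (k.factorial : ℚ) * ∏ j ∈ Finset.Icc 1 n, ((k : ℚ) + j) = (k + n).factorial := by
  induction n with
  | zero => simp
  | succ n ih =>
    rw [Finset.prod_Icc_succ_top (by omega), ← mul_assoc, ih, ← add_assoc, Nat.factorial_succ]
    push_cast
    ring

theorem dQ_eq_factorial_div (n k i : ℕ) (hi : i ∈ Finset.Icc 1 n) :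
    dQ n k i = (k + n).factorial / ((n - 1).factorial * k.factorial * (k + i)) := by
  have hpos : (k : ℚ) + i ≠ 0 := by
    have := (Finset.mem_Icc.mp hi).1
    positivity
  have hk : (k.factorial : ℚ) ≠ 0 := by positivity
  have hn : ((n - 1).factorial : ℚ) ≠ 0 := by positivity
  rw [dQ, ← factorial_mul_prod_Icc_add, ← Finset.mul_prod_erase _ _ hi]
  field_simp

theorem stmt_9 (n k₀ i : ℕ) (hn : 3 ≤ n) (hk : 1 ≤ k₀) (hi1 : 1 ≤ i) (hin : i ≤ n - 1) :
    ((n - 1).choose (i - 1) : ℚ) * (dQ n k₀ i - (c n k₀ : ℚ))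
      = ((k₀ + n - 1).choose (k₀ + i) : ℚ) * ((k₀ + i - 1).choose (i - 1) : ℚ) := by
  rw [dQ_eq_factorial_div n k₀ i (Finset.mem_Icc.mpr ⟨hi1, by omega⟩), c]
  obtain ⟨a, rfl⟩ : ∃ a, i = a + 1 := ⟨i - 1, by omega⟩
  obtain ⟨b, rfl⟩ : ∃ b, n = a + b + 2 := ⟨n - a - 2, by omega⟩
  rw [show a + b + 2 - 1 = a + (b + 1) by omega, show a + 1 - 1 = a by omega,
    show k₀ + (a + b + 2) - 1 = (k₀ + (a + 1)) + b by omega,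
    show k₀ + (a + 1) - 1 = k₀ + a by omega,
    add_comm (a + (b + 1)) k₀, add_comm k₀ a, Nat.cast_add_choose, Nat.cast_add_choose,
    Nat.cast_add_choose, Nat.cast_add_choose,
    show k₀ + (a + b + 2) = (k₀ + a + b + 1) + 1 by omega,
    show k₀ + (a + (b + 1)) = k₀ + a + b + 1 by omega,
    show k₀ + (a + 1) + b = k₀ + a + b + 1 by omega,
    show k₀ + (a + 1) = (a + k₀) + 1 by omega,
    Nat.factorial_succ (k₀ + a + b + 1), Nat.factorial_succ (a + k₀), Nat.factorial_succ b]
  have hpos : (k₀ : ℚ) + (a + 1) ≠ 0 := by positivity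
  push_cast
  field_simp
  ring
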